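/- Let S and A be finite nonempty types, let P° : S → A → (probability vector on S) be a nominal transition kernel, R ∈ [0,1], π : S → (probability vector on A) a policy, r : S → A → ℝ a cost function, g ∈ ℝ and V : S → ℝ. Suppose the robust Bellman equation for the R-contamination uncertainty set holds: V s = ∑_a π s a · ( r s a − g + (1−R)·∑_{s'} P° s a s' · V s' + R·(max_x V x) ) for every s ∈ S. For any choice q : S → A → (probability vector on S), let M_q be the induced Markov matrix M_q s s' = ∑_a π s a · ((1−R)·P° s a s' + R·q s a s'), and let r_π s = ∑_a π s a · r s a. Then: (i) for every q and every s ∈ S, limsup_{T→∞} (1/T)·∑_{t=0}^{T−1} (M_qᵗ.mulVec r_π) s ≤ g; and (ii) there exists q (namely the point mass at a state maximizing V, for every (s,a)) such that for every s ∈ S, (1/T)·∑_{t=0}^{T−1} (M_qᵗ.mulVec r_π) s converges to g as T → ∞. Hence g is the worst-case long-run average cost of π over the contamination uncertainty set, and it is attained. (Theorem 1 specialized to the R-contamination uncertainty set, whose support function has the closed form of Eq. 6.) -/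

import Mathlib

/-!
Write `M` for the Markov matrix of a perturbation `q` and `c` for the one-step cost `r_π`. Since
`∑ x, q s a x * V x ≤ max V`, the robust Bellman equation gives `c ≤ g + V - M V` pointwise, with
equality when every `q s a` is the point mass at a maximizer of `V`. Powers of `M` are
row-stochastic, hence monotone, and the terms `Mᵗ (V - M V)` telescope, so the average cost up to
time `T` is at most `g + (V s - (M ^ T V) s) / T` (`sum_pow_mulVec_le`). As `V` is bounded,
the correction is at most `2 B / T` with `|V| ≤ B`, and it vanishes as `T → ∞`. In the equality
case the same bound applied to `(-c, -g, -V)` gives the matching lower bound.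
-/

namespace RobustBellman

open Matrix Filter

variable {S : Type*} [Fintype S] [DecidableEq S]

lemma mulVec_mono {M : Matrix S S ℝ} (hM : M ∈ rowStochastic ℝ S) {f h : S → ℝ}
    (hfh : ∀ s, f s ≤ h s) (s : S) : (M *ᵥ f) s ≤ (M *ᵥ h) s :=
  Finset.sum_le_sum fun x _ => mul_le_mul_of_nonneg_left (hfh x) (hM.1 s x)

lemma mulVec_const {M : Matrix S S ℝ} (hM : M ∈ rowStochastic ℝ S) (b : ℝ) (s : S) :
    (M *ᵥ fun _ => b) s = b := by
  simp only [mulVec, dotProduct]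
  rw [← Finset.sum_mul, sum_row_of_mem_rowStochastic hM, one_mul]

lemma neg_le_mulVec {M : Matrix S S ℝ} (hM : M ∈ rowStochastic ℝ S) {f : S → ℝ} {B : ℝ}
    (hf : ∀ s, |f s| ≤ B) (s : S) : -B ≤ (M *ᵥ f) s := by
  rw [← mulVec_const hM (-B) s]
  exact mulVec_mono hM (fun x => (abs_le.1 (hf x)).1) s

lemma sum_pow_mulVec_telescope (M : Matrix S S ℝ) (V : S → ℝ) (s : S) (T : ℕ) :
    ∑ t ∈ Finset.range T, ((M ^ t) *ᵥ (V - M *ᵥ V)) s = V s - ((M ^ T) *ᵥ V) s := by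
  induction T with
  | zero => simp
  | succ n ih =>
    rw [Finset.sum_range_succ, ih, mulVec_sub, mulVec_mulVec, ← pow_succ]
    simp

/-- A Bellman inequality bounds the cumulative cost, by monotonicity of `M ^ t` and telescoping. -/
lemma sum_pow_mulVec_le {M : Matrix S S ℝ} (hM : M ∈ rowStochastic ℝ S) {c V : S → ℝ} {g : ℝ}
    (h : ∀ s, c s ≤ g + (V s - (M *ᵥ V) s)) (s : S) (T : ℕ) :
    ∑ t ∈ Finset.range T, ((M ^ t) *ᵥ c) s ≤ T * g + (V s - ((M ^ T) *ᵥ V) s) := by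
  have h1 : ∀ t ∈ Finset.range T, ((M ^ t) *ᵥ c) s ≤ g + ((M ^ t) *ᵥ (V - M *ᵥ V)) s := by
    intro t _
    have hMt := pow_mem hM t
    refine (mulVec_mono hMt (h := (fun _ => g) + (V - M *ᵥ V)) h s).trans_eq ?_
    rw [mulVec_add, Pi.add_apply, mulVec_const hMt]
  refine (Finset.sum_le_sum h1).trans_eq ?_
  rw [Finset.sum_add_distrib, sum_pow_mulVec_telescope]
  simp

lemma avg_le {M : Matrix S S ℝ} (hM : M ∈ rowStochastic ℝ S) {c V : S → ℝ} {g B : ℝ}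
    (hB : ∀ s, |V s| ≤ B) (h : ∀ s, c s ≤ g + (V s - (M *ᵥ V) s)) (s : S) {T : ℕ} (hT : 0 < T) :
    (1 / (T : ℝ)) * ∑ t ∈ Finset.range T, ((M ^ t) *ᵥ c) s ≤ g + 2 * B / T := by
  have hT' : (0 : ℝ) < T := by exact_mod_cast hT
  have h1 := sum_pow_mulVec_le hM h s T
  have h2 := neg_le_mulVec (pow_mem hM T) hB s
  have h3 := (abs_le.1 (hB s)).2
  rw [one_div, inv_mul_le_iff₀ hT', mul_add, mul_div_cancel₀ _ hT'.ne']
  linarith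

lemma exists_abs_bound (f : S → ℝ) : ∃ B, ∀ s, |f s| ≤ B :=
  ⟨∑ x, |f x|, fun s =>
    Finset.single_le_sum (f := fun x => |f x|) (fun _ _ => abs_nonneg _) (Finset.mem_univ s)⟩

lemma tendsto_bound (g B : ℝ) :
    Tendsto (fun T : ℕ => g + 2 * B / T) atTop (nhds g) := by
  simpa using (tendsto_const_div_atTop_nhds_zero_nat (2 * B)).const_add g

lemma limsup_avg_le {M : Matrix S S ℝ} (hM : M ∈ rowStochastic ℝ S) {c V : S → ℝ} {g : ℝ}
    (h : ∀ s, c s ≤ g + (V s - (M *ᵥ V) s)) (s : S) :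
    limsup (fun T : ℕ => (1 / (T : ℝ)) * ∑ t ∈ Finset.range T, ((M ^ t) *ᵥ c) s) atTop ≤ g := by
  obtain ⟨B, hB⟩ := exists_abs_bound V
  obtain ⟨C, hC⟩ := exists_abs_bound c
  -- A real `limsup` is only meaningful, and monotone, once the averages are bounded below.
  have hlow : ∀ᶠ T : ℕ in atTop,
      -C ≤ (1 / (T : ℝ)) * ∑ t ∈ Finset.range T, ((M ^ t) *ᵥ c) s := by
    filter_upwards [eventually_gt_atTop 0] with T hT
    have hT' : (0 : ℝ) < T := by exact_mod_cast hT
    rw [one_div, le_inv_mul_iff₀ hT']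
    calc (T : ℝ) * -C = ∑ _t ∈ Finset.range T, -C := by simp
      _ ≤ _ := Finset.sum_le_sum fun t _ => neg_le_mulVec (pow_mem hM t) hC s
  rw [← (tendsto_bound g B).limsup_eq]
  refine limsup_le_limsup ?_ ?_ (tendsto_bound g B).isBoundedUnder_le
  · filter_upwards [eventually_gt_atTop 0] with T hT using avg_le hM hB h s hT
  · exact (isBoundedUnder_of_eventually_ge hlow).isCoboundedUnder_le

lemma tendsto_avg {M : Matrix S S ℝ} (hM : M ∈ rowStochastic ℝ S) {c V : S → ℝ} {g : ℝ}
    (h : ∀ s, c s = g + (V s - (M *ᵥ V) s)) (s : S) :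
    Tendsto (fun T : ℕ => (1 / (T : ℝ)) * ∑ t ∈ Finset.range T, ((M ^ t) *ᵥ c) s)
      atTop (nhds g) := by
  obtain ⟨B, hB⟩ := exists_abs_bound V
  have hlow : Tendsto (fun T : ℕ => -(-g + 2 * B / T)) atTop (nhds g) := by
    simpa using (tendsto_bound (-g) B).neg
  refine tendsto_of_tendsto_of_tendsto_of_le_of_le' hlow (tendsto_bound g B) ?_ ?_
  · filter_upwards [eventually_gt_atTop 0] with T hT
    have h1 := avg_le hM (c := -c) (V := -V) (g := -g) (B := B) (by simpa using hB)
      (fun x => by simp only [mulVec_neg, Pi.neg_apply]; linarith [h x]) s hT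
    simp only [mulVec_neg, Pi.neg_apply, Finset.sum_neg_distrib, mul_neg] at h1
    linarith
  · filter_upwards [eventually_gt_atTop 0] with T hT
    exact avg_le hM hB (fun x => (h x).le) s hT

variable {A : Type*} [Fintype A]

/-- The Markov matrix induced by the policy `π` and the contaminated kernel
`(1 - R) * Pnom + R * q`. -/
abbrev chain (Pnom q : S → A → S → ℝ) (R : ℝ) (π : S → A → ℝ) : Matrix S S ℝ :=
  Matrix.of fun s₁ s₂ => ∑ a, π s₁ a * ((1 - R) * Pnom s₁ a s₂ + R * q s₁ a s₂)

lemma chain_mem {Pnom q : S → A → S → ℝ} {R : ℝ} {π : S → A → ℝ}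
    (hP : ∀ s a, (∀ s', 0 ≤ Pnom s a s') ∧ ∑ s', Pnom s a s' = 1)
    (hq : ∀ s a, (∀ s', 0 ≤ q s a s') ∧ ∑ s', q s a s' = 1)
    (hR0 : 0 ≤ R) (hR1 : R ≤ 1) (hπ : ∀ s, (∀ a, 0 ≤ π s a) ∧ ∑ a, π s a = 1) :
    chain Pnom q R π ∈ rowStochastic ℝ S := by
  rw [mem_rowStochastic_iff_sum]
  refine ⟨fun s x => Finset.sum_nonneg fun a _ => mul_nonneg ((hπ s).1 a) (add_nonneg
    (mul_nonneg (sub_nonneg.2 hR1) ((hP s a).1 x)) (mul_nonneg hR0 ((hq s a).1 x))), fun s => ?_⟩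
  simp only [of_apply]
  rw [Finset.sum_comm]
  simp_rw [← Finset.mul_sum, Finset.sum_add_distrib, ← Finset.mul_sum, (hP s _).2, (hq s _).2]
  simpa using (hπ s).2

lemma chain_mulVec (Pnom q : S → A → S → ℝ) (R : ℝ) (π : S → A → ℝ) (V : S → ℝ) (s : S) :
    (chain Pnom q R π *ᵥ V) s = ∑ a, π s a *
      ((1 - R) * (∑ x, Pnom s a x * V x) + R * ∑ x, q s a x * V x) := by
  simp only [mulVec, dotProduct, of_apply, Finset.sum_mul]
  rw [Finset.sum_comm]
  refine Finset.sum_congr rfl fun a _ => ?_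
  simp only [Finset.mul_sum, ← Finset.sum_add_distrib]
  exact Finset.sum_congr rfl fun x _ => by ring

/-- The Bellman equation solved for the one-step cost. With `m = max V`, the last sum is the
`π`-average of the support functions of the contamination sets at `V`; for probability vectors `q`
and `0 ≤ R`, it dominates `(chain Pnom q R π *ᵥ V) s`. -/
lemma cost_eq {Pnom : S → A → S → ℝ} {R g m : ℝ} {π r : S → A → ℝ} {V : S → ℝ} {s : S}
    (hπ : ∑ a, π s a = 1)
    (hb : V s = ∑ a, π s a * (r s a - g + (1 - R) * (∑ x, Pnom s a x * V x) + R * m)) :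
    ∑ a, π s a * r s a = g + (V s - ∑ a, π s a *
      ((1 - R) * (∑ x, Pnom s a x * V x) + R * m)) := by
  have hg : g = ∑ a, π s a * g := by rw [← Finset.sum_mul, hπ, one_mul]
  nth_rewrite 1 [hg]
  rw [hb, ← Finset.sum_sub_distrib, ← Finset.sum_add_distrib]
  exact Finset.sum_congr rfl fun a _ => by ring

end RobustBellman

/-- Theorem 1 specialized to the `R`-contamination uncertainty set.
If `(g, V)` solves the robust Bellman equation
`V s = ∑_a π s a · ( r s a − g + (1−R)·∑_{s'} P° s a s' · V s' + R·max_x V x )`,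
then (i) for every kernel perturbation `q` the long-run average cost of the induced
Markov chain is at most `g` (in the `limsup` sense), and (ii) some perturbation `q`
attains `g` (Cesàro convergence). Hence `g` is the attained worst-case long-run
average cost of `π` over the contamination uncertainty set. -/
theorem robust_bellman_contamination_average_cost
    {S A : Type*} [Fintype S] [DecidableEq S] [Nonempty S] [Fintype A] [Nonempty A]
    (Pnom : S → A → S → ℝ)
    (hPnom : ∀ s a, (∀ s', 0 ≤ Pnom s a s') ∧ ∑ s', Pnom s a s' = 1)
    (R : ℝ) (hR0 : 0 ≤ R) (hR1 : R ≤ 1)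
    (π : S → A → ℝ) (hπ : ∀ s, (∀ a, 0 ≤ π s a) ∧ ∑ a, π s a = 1)
    (r : S → A → ℝ) (g : ℝ) (V : S → ℝ)
    (hbell : ∀ s, V s = ∑ a, π s a *
      (r s a - g + (1 - R) * (∑ s', Pnom s a s' * V s')
        + R * (Finset.univ.sup' Finset.univ_nonempty V))) :
    (∀ q : S → A → S → ℝ,
      (∀ s a, (∀ s', 0 ≤ q s a s') ∧ ∑ s', q s a s' = 1) →
      ∀ s, Filter.limsup
        (fun T : ℕ => (1 / (T : ℝ)) * ∑ t ∈ Finset.range T,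
          (((Matrix.of fun s₁ s₂ =>
              ∑ a, π s₁ a * ((1 - R) * Pnom s₁ a s₂ + R * q s₁ a s₂)) ^ t).mulVec
            (fun s₁ => ∑ a, π s₁ a * r s₁ a)) s)
        Filter.atTop ≤ g)
    ∧
    (∃ q : S → A → S → ℝ,
      (∀ s a, (∀ s', 0 ≤ q s a s') ∧ ∑ s', q s a s' = 1) ∧
      ∀ s, Filter.Tendsto
        (fun T : ℕ => (1 / (T : ℝ)) * ∑ t ∈ Finset.range T,
          (((Matrix.of fun s₁ s₂ =>
              ∑ a, π s₁ a * ((1 - R) * Pnom s₁ a s₂ + R * q s₁ a s₂)) ^ t).mulVec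
            (fun s₁ => ∑ a, π s₁ a * r s₁ a)) s)
        Filter.atTop (nhds g)) := by
  refine ⟨fun q hq s => ?_, ?_⟩
  · refine RobustBellman.limsup_avg_le (V := V)
      (RobustBellman.chain_mem hPnom hq hR0 hR1 hπ) (fun x => ?_) s
    rw [RobustBellman.cost_eq (hπ x).2 (hbell x), RobustBellman.chain_mulVec]
    gcongr with a _
    · exact (hπ x).1 a
    · calc ∑ y, q x a y * V y
          ≤ ∑ y, q x a y * Finset.univ.sup' Finset.univ_nonempty V :=
            Finset.sum_le_sum fun y _ => mul_le_mul_of_nonneg_left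
              (Finset.le_sup' V (Finset.mem_univ y)) ((hq x a).1 y)
        _ = Finset.univ.sup' Finset.univ_nonempty V := by
            rw [← Finset.sum_mul, (hq x a).2, one_mul]
  · obtain ⟨z, -, hz⟩ := Finset.exists_mem_eq_sup' Finset.univ_nonempty V
    have hq : ∀ (s : S) (a : A), (∀ s', 0 ≤ (fun _ _ y => if y = z then 1 else 0 : S → A → S → ℝ)
        s a s') ∧ ∑ s', (fun _ _ y => if y = z then 1 else 0 : S → A → S → ℝ) s a s' = 1 :=
      fun s a => ⟨fun y => by dsimp only; split_ifs <;> norm_num, by simp⟩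
    refine ⟨_, hq, fun s => ?_⟩
    refine RobustBellman.tendsto_avg (V := V)
      (RobustBellman.chain_mem hPnom hq hR0 hR1 hπ) (fun x => ?_) s
    rw [RobustBellman.cost_eq (hπ x).2 (hbell x), RobustBellman.chain_mulVec, hz]
    simp
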